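/- Let (H, β) be a monoidal Hom-Hopf algebra with bijective antipode S and fix an integer n. Then H^op (H with the opposite multiplication and the same unit, comultiplication, counit and automorphism β), equipped with the action ◁ : H^op ⊗ H → H^op defined by x ◁ h = β^{n+1}(S⁻¹(h_2))·(β⁻¹(x)·β^n(h_1)) (products computed in H), is a right (H, β)-Hom-module algebra. -/

import Mathlib

open TensorProduct

/-! Basic notions of monoidal Hom-algebras, Hom-coalgebras, Hom-bialgebras and
Hom-Hopf algebras over a field `k`, following Caenepeel–Goyvaerts.  All Sweedler-type
identities are expressed via the tensor-product calculus of Mathlib. -/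

/-- A (unital) monoidal Hom-associative algebra `(A, α)`. -/
structure HomAlg (k : Type*) [Field k] (A : Type*) [AddCommGroup A] [Module k A] where
  mul : A →ₗ[k] A →ₗ[k] A
  one : A
  str : A ≃ₗ[k] A
  hom_assoc : ∀ a b c, mul (str a) (mul b c) = mul (mul a b) (str c)
  mul_one : ∀ a, mul a one = str a
  one_mul : ∀ a, mul one a = str a
  str_mul : ∀ a b, str (mul a b) = mul (str a) (str b)
  str_one : str one = one

/-- A (counital) monoidal Hom-coassociative coalgebra `(C, λ)`. -/
structure HomCoalg (k : Type*) [Field k] (C : Type*) [AddCommGroup C] [Module k C] where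
  comul : C →ₗ[k] C ⊗[k] C
  counit : C →ₗ[k] k
  str : C ≃ₗ[k] C
  hom_coassoc : ∀ c,
    TensorProduct.map str.symm.toLinearMap comul (comul c)
      = TensorProduct.assoc k C C C (TensorProduct.map comul str.symm.toLinearMap (comul c))
  counit_comul_right : ∀ c,
    TensorProduct.rid k C (TensorProduct.map LinearMap.id counit (comul c)) = str.symm c
  counit_comul_left : ∀ c,
    TensorProduct.lid k C (TensorProduct.map counit LinearMap.id (comul c)) = str.symm c
  comul_str : ∀ c, comul (str c) = TensorProduct.map str.toLinearMap str.toLinearMap (comul c)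
  counit_str : ∀ c, counit (str c) = counit c

/-- A monoidal Hom-bialgebra `(H, β)`. -/
structure HomBialg (k : Type*) [Field k] (H : Type*) [AddCommGroup H] [Module k H]
    extends HomAlg k H, HomCoalg k H where
  comul_mul : ∀ a b,
    comul (mul a b)
      = TensorProduct.map (TensorProduct.lift mul) (TensorProduct.lift mul)
          (TensorProduct.tensorTensorTensorComm k H H H H (comul a ⊗ₜ[k] comul b))
  comul_one : comul one = one ⊗ₜ[k] one
  counit_mul : ∀ a b, counit (mul a b) = counit a * counit b
  counit_one : counit one = 1

/-- A monoidal Hom-Hopf algebra `(H, β, S)`. -/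
structure HomHopf (k : Type*) [Field k] (H : Type*) [AddCommGroup H] [Module k H]
    extends HomBialg k H where
  S : H →ₗ[k] H
  S_str : ∀ h, str (S h) = S (str h)
  S_mul_left : ∀ h,
    TensorProduct.lift mul (TensorProduct.map S LinearMap.id (comul h)) = counit h • one
  S_mul_right : ∀ h,
    TensorProduct.lift mul (TensorProduct.map LinearMap.id S (comul h)) = counit h • one

section HomDefs

variable {k : Type*} [Field k] {A H M C T : Type*}
  [AddCommGroup A] [Module k A] [AddCommGroup H] [Module k H]
  [AddCommGroup M] [Module k M] [AddCommGroup C] [Module k C]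
  [AddCommGroup T] [Module k T]

/-- `(M, μ)` is a right `(A, α)`-Hom-module via `act`. -/
def IsRightHomModule (AA : HomAlg k A) (μ : M ≃ₗ[k] M) (act : M →ₗ[k] A →ₗ[k] M) : Prop :=
  (∀ m a b, act (act m a) (AA.str b) = act (μ m) (AA.mul a b)) ∧
  (∀ m, act m AA.one = μ m) ∧
  (∀ m a, μ (act m a) = act (μ m) (AA.str a))

/-- The monoidal Hom-algebra `(HM, β)` is a right `(A, α)`-Hom-module algebra via `act`. -/
def IsRightHomModuleAlg (AA : HomBialg k A) (HM : HomAlg k H)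
    (act : H →ₗ[k] A →ₗ[k] H) : Prop :=
  IsRightHomModule AA.toHomAlg HM.str act ∧
  (∀ h g a, act (HM.mul h g) a
      = TensorProduct.lift HM.mul (TensorProduct.map (act h) (act g) (AA.comul a))) ∧
  (∀ a, act HM.one a = AA.counit a • HM.one)

/-- `(M, μ)` is a left `(H, β)`-Hom-module via `act`. -/
def IsLeftHomModule (HHa : HomAlg k H) (μ : M ≃ₗ[k] M) (act : H →ₗ[k] M →ₗ[k] M) : Prop :=
  (∀ h g m, act (HHa.str h) (act g m) = act (HHa.mul h g) (μ m)) ∧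
  (∀ m, act HHa.one m = μ m) ∧
  (∀ h m, μ (act h m) = act (HHa.str h) (μ m))

/-- The monoidal Hom-algebra `(AM, α)` is a left `(H, β)`-Hom-module algebra via `act`. -/
def IsLeftHomModuleAlg (HB : HomBialg k H) (AM : HomAlg k A)
    (act : H →ₗ[k] A →ₗ[k] A) : Prop :=
  IsLeftHomModule HB.toHomAlg AM.str act ∧
  (∀ h a b, act h (AM.mul a b)
      = TensorProduct.lift AM.mul
          (TensorProduct.map (act.flip a) (act.flip b) (HB.comul h))) ∧
  (∀ h, act h AM.one = HB.counit h • AM.one)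

/-- `(M, μ)` is a left `(H, β)`-Hom-comodule via `ρ`. -/
def IsLeftHomComodule (HC : HomCoalg k H) (μ : M ≃ₗ[k] M) (ρ : M →ₗ[k] H ⊗[k] M) : Prop :=
  (∀ m, TensorProduct.map HC.str.symm.toLinearMap ρ (ρ m)
      = TensorProduct.assoc k H H M
          (TensorProduct.map HC.comul μ.symm.toLinearMap (ρ m))) ∧
  (∀ m, ρ (μ m) = TensorProduct.map HC.str.toLinearMap μ.toLinearMap (ρ m)) ∧
  (∀ m, TensorProduct.lid k M (TensorProduct.map HC.counit LinearMap.id (ρ m)) = μ.symm m)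

/-- The monoidal Hom-coalgebra `(CC, λ)` is a left `(H, β)`-Hom-comodule coalgebra via `ρ`. -/
def IsLeftHomComoduleCoalg (HB : HomBialg k H) (CC : HomCoalg k C)
    (ρ : C →ₗ[k] H ⊗[k] C) : Prop :=
  IsLeftHomComodule HB.toHomCoalg CC.str ρ ∧
  (∀ c, TensorProduct.map LinearMap.id CC.comul (ρ c)
      = TensorProduct.map (TensorProduct.lift HB.mul) LinearMap.id
          (TensorProduct.tensorTensorTensorComm k H C H C
            (TensorProduct.map ρ ρ (CC.comul c)))) ∧
  (∀ c, TensorProduct.rid k H (TensorProduct.map LinearMap.id CC.counit (ρ c))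
      = CC.counit c • HB.one)

/-- The monoidal Hom-algebra `(AM, α)` is a left `(H, β)`-Hom-comodule algebra via `ρ`. -/
def IsLeftHomComoduleAlg (HB : HomBialg k H) (AM : HomAlg k A)
    (ρ : A →ₗ[k] H ⊗[k] A) : Prop :=
  IsLeftHomComodule HB.toHomCoalg AM.str ρ ∧
  (∀ a b, ρ (AM.mul a b)
      = TensorProduct.map (TensorProduct.lift HB.mul) (TensorProduct.lift AM.mul)
          (TensorProduct.tensorTensorTensorComm k H A H A (ρ a ⊗ₜ[k] ρ b))) ∧
  ρ AM.one = HB.one ⊗ₜ[k] AM.one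

/-- `(M, μ)` is a right `(C, λ)`-Hom-comodule via `ρ`. -/
def IsRightHomComodule (CC : HomCoalg k C) (μ : M ≃ₗ[k] M) (ρ : M →ₗ[k] M ⊗[k] C) : Prop :=
  (∀ m, TensorProduct.map μ.symm.toLinearMap CC.comul (ρ m)
      = TensorProduct.assoc k M C C
          (TensorProduct.map ρ CC.str.symm.toLinearMap (ρ m))) ∧
  (∀ m, ρ (μ m) = TensorProduct.map μ.toLinearMap CC.str.toLinearMap (ρ m)) ∧
  (∀ m, TensorProduct.rid k M (TensorProduct.map LinearMap.id CC.counit (ρ m)) = μ.symm m)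

/-- The monoidal Hom-coalgebra `(CC, λ)` is a right `(A, α)`-Hom-comodule coalgebra via `ρ`. -/
def IsRightHomComoduleCoalg (AB : HomBialg k A) (CC : HomCoalg k C)
    (ρ : C →ₗ[k] C ⊗[k] A) : Prop :=
  IsRightHomComodule AB.toHomCoalg CC.str ρ ∧
  (∀ c, TensorProduct.map CC.comul LinearMap.id (ρ c)
      = TensorProduct.map LinearMap.id (TensorProduct.lift AB.mul)
          (TensorProduct.tensorTensorTensorComm k C A C A
            (TensorProduct.map ρ ρ (CC.comul c)))) ∧
  (∀ c, TensorProduct.lid k A (TensorProduct.map CC.counit LinearMap.id (ρ c))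
      = CC.counit c • AB.one)

/-- The monoidal Hom-algebra `(MM, μ)` is a right `(A, α)`-Hom-comodule algebra via `ρ`. -/
def IsRightHomComoduleAlg (AB : HomBialg k A) (MM : HomAlg k M)
    (ρ : M →ₗ[k] M ⊗[k] A) : Prop :=
  IsRightHomComodule AB.toHomCoalg MM.str ρ ∧
  (∀ m n, ρ (MM.mul m n)
      = TensorProduct.map (TensorProduct.lift MM.mul) (TensorProduct.lift AB.mul)
          (TensorProduct.tensorTensorTensorComm k M A M A (ρ m ⊗ₜ[k] ρ n))) ∧
  ρ MM.one = MM.one ⊗ₜ[k] AB.one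

/-- A matched copair `(A, H)` of monoidal Hom-bialgebras:
`A` is a left `H`-Hom-comodule algebra via `ρA : A → H ⊗ A`, `H` is a right
`A`-Hom-comodule algebra via `ρH : H → H ⊗ A`, subject to conditions (4.1)–(4.5). -/
def IsMatchedCopair (AB : HomBialg k A) (HB : HomBialg k H)
    (ρA : A →ₗ[k] H ⊗[k] A) (ρH : H →ₗ[k] H ⊗[k] A) : Prop :=
  IsLeftHomComoduleAlg HB AB.toHomAlg ρA ∧
  IsRightHomComoduleAlg AB HB.toHomAlg ρH ∧
  -- (4.1)
  (∀ a, TensorProduct.rid k H (TensorProduct.map LinearMap.id AB.counit (ρA a))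
      = AB.counit a • HB.one) ∧
  -- (4.2)
  (∀ a, TensorProduct.map LinearMap.id AB.comul (ρA a)
      = TensorProduct.map
          (TensorProduct.lift HB.mul ∘ₗ TensorProduct.map LinearMap.id HB.str.toLinearMap)
          ((TensorProduct.map
              (TensorProduct.lift AB.mul ∘ₗ TensorProduct.map AB.str.symm.toLinearMap LinearMap.id)
              LinearMap.id) ∘ₗ (TensorProduct.assoc k A A A).symm.toLinearMap)
          (TensorProduct.tensorTensorTensorComm k H A H (A ⊗[k] A)
            (TensorProduct.map LinearMap.id (TensorProduct.assoc k H A A).toLinearMap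
              (TensorProduct.map LinearMap.id (TensorProduct.map ρH LinearMap.id)
                (TensorProduct.map ρA ρA (AB.comul a)))))) ∧
  -- (4.3)
  (∀ h, TensorProduct.lid k A (TensorProduct.map HB.counit LinearMap.id (ρH h))
      = HB.counit h • AB.one) ∧
  -- (4.4)
  (∀ h, TensorProduct.map HB.comul LinearMap.id (ρH h)
      = TensorProduct.map
          ((TensorProduct.map LinearMap.id
              (TensorProduct.lift HB.mul ∘ₗ TensorProduct.map LinearMap.id HB.str.symm.toLinearMap))
            ∘ₗ (TensorProduct.assoc k H H H).toLinearMap)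
          (TensorProduct.lift AB.mul ∘ₗ TensorProduct.map AB.str.toLinearMap LinearMap.id)
          (TensorProduct.tensorTensorTensorComm k (H ⊗[k] H) A H A
            (TensorProduct.map (TensorProduct.assoc k H H A).symm.toLinearMap LinearMap.id
              (TensorProduct.map (TensorProduct.map LinearMap.id ρA) LinearMap.id
                (TensorProduct.map ρH ρH (HB.comul h)))))) ∧
  -- (4.5)
  (∀ h a, TensorProduct.map (TensorProduct.lift HB.mul) (TensorProduct.lift AB.mul)
        (TensorProduct.tensorTensorTensorComm k H A H A (ρH h ⊗ₜ[k] ρA a))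
      = TensorProduct.map (TensorProduct.lift HB.mul) (TensorProduct.lift AB.mul)
          (TensorProduct.tensorTensorTensorComm k H A H A (ρA a ⊗ₜ[k] ρH h)))

/-- A coquasitriangular structure `ζ` (with convolution inverse `ζi`) on a monoidal
Hom-bialgebra `P`; conditions (5.1)–(5.4). -/
def IsCoquasitriangular (P : HomBialg k T) (ζ ζi : T →ₗ[k] T →ₗ[k] k) : Prop :=
  -- convolution invertibility
  (∀ h g, TensorProduct.lid k k
      (TensorProduct.map (TensorProduct.lift ζ) (TensorProduct.lift ζi)
        (TensorProduct.tensorTensorTensorComm k T T T T (P.comul h ⊗ₜ[k] P.comul g)))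
      = P.counit h * P.counit g) ∧
  (∀ h g, TensorProduct.lid k k
      (TensorProduct.map (TensorProduct.lift ζi) (TensorProduct.lift ζ)
        (TensorProduct.tensorTensorTensorComm k T T T T (P.comul h ⊗ₜ[k] P.comul g)))
      = P.counit h * P.counit g) ∧
  -- (5.1)
  (∀ h g, ζ (P.str h) (P.str g) = ζ h g) ∧
  -- (5.2)
  (∀ h g, TensorProduct.lid k T
      (TensorProduct.map (TensorProduct.lift ζ)
        (TensorProduct.lift P.mul ∘ₗ (TensorProduct.comm k T T).toLinearMap)
        (TensorProduct.tensorTensorTensorComm k T T T T (P.comul h ⊗ₜ[k] P.comul g)))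
      = TensorProduct.rid k T
          (TensorProduct.map (TensorProduct.lift P.mul) (TensorProduct.lift ζ)
            (TensorProduct.tensorTensorTensorComm k T T T T (P.comul h ⊗ₜ[k] P.comul g)))) ∧
  -- (5.3)
  (∀ h g c, ζ (P.str.symm h) (P.mul g c)
      = TensorProduct.lid k k
          (TensorProduct.map (ζ.flip (P.str g)) (ζ.flip (P.str c)) (P.comul h))) ∧
  -- (5.4)
  (∀ h g c, ζ (P.mul h g) (P.str.symm c)
      = TensorProduct.lid k k
          (TensorProduct.map (ζ (P.str h)) (ζ (P.str g))
            ((TensorProduct.comm k T T) (P.comul c))))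

/-- `σ` is a left monoidal Hom-2-cocycle on the monoidal Hom-bialgebra `P`. -/
def IsLeftHom2Cocycle (P : HomBialg k T) (σ : T →ₗ[k] T →ₗ[k] k) : Prop :=
  (∀ h g, σ (P.str h) (P.str g) = σ h g) ∧
  (∀ h g c, TensorProduct.lid k k
      (TensorProduct.map (TensorProduct.lift σ) (σ.flip c ∘ₗ TensorProduct.lift P.mul)
        (TensorProduct.tensorTensorTensorComm k T T T T (P.comul h ⊗ₜ[k] P.comul g)))
      = TensorProduct.lid k k
          (TensorProduct.map (TensorProduct.lift σ) (σ h ∘ₗ TensorProduct.lift P.mul)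
            (TensorProduct.tensorTensorTensorComm k T T T T (P.comul g ⊗ₜ[k] P.comul c))))

/-- `σ` is a right monoidal Hom-2-cocycle on the monoidal Hom-bialgebra `P`. -/
def IsRightHom2Cocycle (P : HomBialg k T) (σ : T →ₗ[k] T →ₗ[k] k) : Prop :=
  (∀ h g, σ (P.str h) (P.str g) = σ h g) ∧
  (∀ h g c, TensorProduct.lid k k
      (TensorProduct.map (σ.flip c ∘ₗ TensorProduct.lift P.mul) (TensorProduct.lift σ)
        (TensorProduct.tensorTensorTensorComm k T T T T (P.comul h ⊗ₜ[k] P.comul g)))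
      = TensorProduct.lid k k
          (TensorProduct.map (σ h ∘ₗ TensorProduct.lift P.mul) (TensorProduct.lift σ)
            (TensorProduct.tensorTensorTensorComm k T T T T (P.comul g ⊗ₜ[k] P.comul c))))

/-- Normality of a 2-cocycle: `σ(1, h) = σ(h, 1) = ε(h)`. -/
def IsNormal2Cocycle (P : HomBialg k T) (σ : T →ₗ[k] T →ₗ[k] k) : Prop :=
  (∀ h, σ P.one h = P.counit h) ∧ (∀ h, σ h P.one = P.counit h)

/-- The left-twisted product `h ·_σ g = σ(h₁, g₁) β(h₂ g₂)`. -/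
noncomputable def leftTwistMul (P : HomBialg k T) (σ : T →ₗ[k] T →ₗ[k] k) (h g : T) : T :=
  TensorProduct.lid k T
    (TensorProduct.map (TensorProduct.lift σ) (P.str.toLinearMap ∘ₗ TensorProduct.lift P.mul)
      (TensorProduct.tensorTensorTensorComm k T T T T (P.comul h ⊗ₜ[k] P.comul g)))

/-- The right-twisted product `h ·_σ g = β(h₁ g₁) σ(h₂, g₂)`. -/
noncomputable def rightTwistMul (P : HomBialg k T) (σ : T →ₗ[k] T →ₗ[k] k) (h g : T) : T :=
  TensorProduct.rid k T
    (TensorProduct.map (P.str.toLinearMap ∘ₗ TensorProduct.lift P.mul) (TensorProduct.lift σ)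
      (TensorProduct.tensorTensorTensorComm k T T T T (P.comul h ⊗ₜ[k] P.comul g)))

/-- The convolution product on the linear dual of a monoidal Hom-coalgebra:
`(u • v)(h) = u(h₁) v(h₂)`. -/
noncomputable def convD (CC : HomCoalg k H) (u v : Module.Dual k H) : Module.Dual k H :=
  (TensorProduct.lid k k).toLinearMap ∘ₗ TensorProduct.map u v ∘ₗ CC.comul

end HomDefs

section Ordinary

open TensorProduct

variable {k : Type*} [Field k] {H : Type*} [Ring H] [HopfAlgebra k H]

/-- The bilinear map `l ⊗ r ↦ T r * (x * l)`. -/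
noncomputable def ordF (T : H →ₗ[k] H) (x : H) : H ⊗[k] H →ₗ[k] H :=
  LinearMap.mul' k H ∘ₗ (TensorProduct.comm k H H).toLinearMap ∘ₗ
    TensorProduct.map (LinearMap.mulLeft k x) T

theorem ordF_tmul (T : H →ₗ[k] H) (x l r : H) :
    ordF T x (l ⊗ₜ[k] r) = T r * (x * l) := by
  simp [ordF]

theorem ordF_add (T : H →ₗ[k] H) (x y : H) : ordF T (x + y) = ordF T x + ordF T y := by
  ext l r
  simp [ordF_tmul, add_mul, mul_add]

theorem ordF_smul (T : H →ₗ[k] H) (c : k) (x : H) : ordF T (c • x) = c • ordF T x := by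
  ext l r
  simp [ordF_tmul]

theorem ordF_zero (T : H →ₗ[k] H) : ordF T (0 : H) = 0 := by
  ext l r
  simp [ordF_tmul]

theorem ord_Sinv_mul (T : H →ₗ[k] H) (h1 : ∀ h, T (HopfAlgebra.antipode k h) = h)
    (h2 : ∀ h, HopfAlgebra.antipode k (T h) = h) (a b : H) : T (a * b) = T b * T a := by
  have : HopfAlgebra.antipode k (T (a * b)) = HopfAlgebra.antipode k (T b * T a) := by
    rw [HopfAlgebra.antipode_mul_antidistrib, h2, h2, h2]
  rw [← h1 (T (a * b)), this, h1]

theorem ord_contract_right (T : H →ₗ[k] H) (h1 : ∀ h, T (HopfAlgebra.antipode k h) = h)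
    (h2 : ∀ h, HopfAlgebra.antipode k (T h) = h) (p : H) :
    LinearMap.mul' k H (TensorProduct.comm k H H
      (TensorProduct.map T LinearMap.id (Coalgebra.comul (R := k) p)))
      = algebraMap k H (Coalgebra.counit p) := by
  have key : ∀ t : H ⊗[k] H, HopfAlgebra.antipode k (LinearMap.mul' k H (TensorProduct.comm k H H
      (TensorProduct.map T LinearMap.id t))) =
      LinearMap.mul' k H ((HopfAlgebra.antipode k).lTensor H t) := by
    intro t
    induction t with
    | zero => simp
    | tmul x y => simp [HopfAlgebra.antipode_mul_antidistrib, h2]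
    | add x y hx hy => simp only [map_add, hx, hy]
  have h3 := key (Coalgebra.comul p)
  rw [HopfAlgebra.mul_antipode_lTensor_comul_apply] at h3
  rw [← h1 (LinearMap.mul' k H _), h3, Algebra.algebraMap_eq_smul_one, map_smul]
  congr 1
  conv_lhs => rw [← HopfAlgebra.antipode_one (R := k), h1]

theorem ord_contract_left (T : H →ₗ[k] H) (h1 : ∀ h, T (HopfAlgebra.antipode k h) = h)
    (h2 : ∀ h, HopfAlgebra.antipode k (T h) = h) (p : H) :
    ordF T 1 (Coalgebra.comul (R := k) p)
      = algebraMap k H (Coalgebra.counit p) := by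
  have key : ∀ t : H ⊗[k] H, HopfAlgebra.antipode k (ordF T 1 t) =
      LinearMap.mul' k H ((HopfAlgebra.antipode k).rTensor H t) := by
    intro t
    induction t with
    | zero => simp
    | tmul x y => simp [ordF_tmul, HopfAlgebra.antipode_mul_antidistrib, h2]
    | add x y hx hy => simp only [map_add, hx, hy]
  have h3 := key (Coalgebra.comul p)
  rw [HopfAlgebra.mul_antipode_rTensor_comul_apply] at h3
  rw [← h1 (ordF T 1 _), h3, Algebra.algebraMap_eq_smul_one, map_smul]
  congr 1
  conv_lhs => rw [← HopfAlgebra.antipode_one (R := k), h1]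

theorem ord_act_mul (T : H →ₗ[k] H) (h1 : ∀ h, T (HopfAlgebra.antipode k h) = h)
    (h2 : ∀ h, HopfAlgebra.antipode k (T h) = h) (x a b : H) :
    ordF T (ordF T x (Coalgebra.comul (R := k) a)) (Coalgebra.comul (R := k) b)
      = ordF T x (Coalgebra.comul (R := k) (a * b)) := by
  have key : ∀ s t : H ⊗[k] H, ordF T (ordF T x s) t = ordF T x (s * t) := by
    intro s t
    induction s with
    | zero => simp [ordF_zero]
    | add s s' hs hs' => rw [map_add, ordF_add, LinearMap.add_apply, hs, hs', add_mul, map_add]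
    | tmul p q =>
      induction t with
      | zero => simp
      | add t t' ht ht' => rw [map_add, ht, ht', mul_add, map_add]
      | tmul p' q' =>
        simp [ordF_tmul, ord_Sinv_mul T h1 h2, mul_assoc]
  rw [key, Bialgebra.comul_mul]

theorem ord_act_one (T : H →ₗ[k] H) (h1 : ∀ h, T (HopfAlgebra.antipode k h) = h) (x : H) :
    ordF T x (Coalgebra.comul (R := k) 1) = x := by
  have : T 1 = 1 := by
    conv_lhs => rw [← HopfAlgebra.antipode_one (R := k), h1]
  rw [Bialgebra.comul_one, Algebra.TensorProduct.one_def, ordF_tmul, this]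
  simp

theorem ord_act_alg (T : H →ₗ[k] H) (h1 : ∀ h, T (HopfAlgebra.antipode k h) = h)
    (h2 : ∀ h, HopfAlgebra.antipode k (T h) = h) (x y h : H) :
    ordF T (y * x) (Coalgebra.comul (R := k) h)
      = LinearMap.mul' k H (TensorProduct.comm k H H
          (TensorProduct.map (ordF T x ∘ₗ Coalgebra.comul) (ordF T y ∘ₗ Coalgebra.comul)
            (Coalgebra.comul (R := k) h))) := by
  -- `l ⊗ (b ⊗ r) ↦ F y (Δ r) * (T b * (x * l))`
  let Δ : H →ₗ[k] H ⊗[k] H := Coalgebra.comul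
  let Φ : H ⊗[k] (H ⊗[k] (H ⊗[k] H)) →ₗ[k] H :=
    LinearMap.mul' k H ∘ₗ (TensorProduct.comm k H H).toLinearMap ∘ₗ
      TensorProduct.map (ordF T x) (ordF T y) ∘ₗ (TensorProduct.assoc k H H (H ⊗[k] H)).symm.toLinearMap
  have e1 : ∀ t : H ⊗[k] H, LinearMap.mul' k H (TensorProduct.comm k H H
          (TensorProduct.map (ordF T x ∘ₗ Coalgebra.comul) (ordF T y ∘ₗ Coalgebra.comul) t))
      = Φ (TensorProduct.map LinearMap.id (TensorProduct.map LinearMap.id Δ)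
          (TensorProduct.assoc k H H H (Δ.rTensor H t))) := by
    intro t
    induction t with
    | zero => simp
    | add t t' ht ht' => simp only [map_add, ht, ht']
    | tmul l r =>
      have e : ∀ s : H ⊗[k] H, LinearMap.mul' k H (TensorProduct.comm k H H
          (ordF T x s ⊗ₜ[k] ordF T y (Δ r)))
        = Φ (TensorProduct.map LinearMap.id (TensorProduct.map LinearMap.id Δ)
          (TensorProduct.assoc k H H H (s ⊗ₜ[k] r))) := by
        intro s
        induction s with
        | zero => simp
        | add t t' ht ht' => simp only [map_add, add_tmul, ht, ht']
        | tmul p q => simp [Φ]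
      exact e (Δ l)
  have e2 : ∀ t : H ⊗[k] H, Φ (TensorProduct.map LinearMap.id (TensorProduct.map LinearMap.id Δ)
        (Δ.lTensor H t)) = ordF T (y * x) t := by
    intro t
    induction t with
    | zero => simp
    | add t t' ht ht' => simp only [map_add, ht, ht']
    | tmul l r =>
      have c : TensorProduct.map LinearMap.id Δ (Δ r)
          = TensorProduct.assoc k H H H (Δ.rTensor H (Δ r)) :=
        (Coalgebra.coassoc_apply (R := k) r).symm
      rw [LinearMap.lTensor_tmul, TensorProduct.map_tmul, c]
      have e : ∀ s : H ⊗[k] H, Φ (LinearMap.id (R := k) l ⊗ₜ[k]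
          (TensorProduct.assoc k H H H (Δ.rTensor H s)))
          = ordF T (y * x) (l ⊗ₜ[k] (TensorProduct.lid k H
              ((Coalgebra.counit (R := k) (A := H)).rTensor H s))) := by
        intro s
        induction s with
        | zero => simp
        | add t t' ht ht' => simp only [map_add, tmul_add, ht, ht']
        | tmul p d =>
          have e' : ∀ u : H ⊗[k] H, Φ (LinearMap.id (R := k) l ⊗ₜ[k]
            (TensorProduct.assoc k H H H (u ⊗ₜ[k] d)))
            = T d * (y * (LinearMap.mul' k H (TensorProduct.comm k H H
              (TensorProduct.map T LinearMap.id u)) * (x * l))) := by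
            intro u
            induction u with
            | zero => simp
            | add t t' ht ht' =>
              simp only [map_add, add_tmul, tmul_add, ht, ht', mul_add, add_mul]
            | tmul b c => simp [Φ, ordF_tmul, mul_assoc]
          rw [LinearMap.rTensor_tmul, e', ord_contract_right T h1 h2]
          simp [ordF_tmul, mul_assoc, Algebra.algebraMap_eq_smul_one]
      rw [e]
      congr 2
      have := Coalgebra.rTensor_counit_comul (R := k) r
      rw [this]
      simp
  rw [e1]
  have := Coalgebra.coassoc_apply (R := k) h
  rw [show TensorProduct.assoc k H H H (Δ.rTensor H (Coalgebra.comul h))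
    = Δ.lTensor H (Coalgebra.comul h) from this, e2]

end Ordinary

section Untwist

open TensorProduct

variable {k : Type*} [Field k] {H : Type*} [AddCommGroup H] [Module k H]

theorem HomHopf.symm_mul (HH : HomHopf k H) (a b : H) :
    HH.str.symm (HH.mul a b) = HH.mul (HH.str.symm a) (HH.str.symm b) := by
  apply HH.str.injective
  simp [HH.str_mul]

theorem HomHopf.symm_one (HH : HomHopf k H) : HH.str.symm HH.one = HH.one := by
  rw [LinearEquiv.symm_apply_eq, HH.str_one]

/-- The ordinary ring underlying a monoidal Hom-Hopf algebra. -/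
abbrev HomHopf.ring (HH : HomHopf k H) : Ring H :=
  { (inferInstance : AddCommGroup H) with
    mul := fun a b => HH.str.symm (HH.mul a b)
    one := HH.one
    left_distrib := fun a b c => by
      change HH.str.symm (HH.mul a (b + c)) = HH.str.symm (HH.mul a b) + HH.str.symm (HH.mul a c)
      simp
    right_distrib := fun a b c => by
      change HH.str.symm (HH.mul (a + b) c) = HH.str.symm (HH.mul a c) + HH.str.symm (HH.mul b c)
      simp
    zero_mul := fun a => by
      change HH.str.symm (HH.mul 0 a) = 0
      simp
    mul_zero := fun a => by
      change HH.str.symm (HH.mul a 0) = 0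
      simp
    mul_assoc := fun a b c => by
      change HH.str.symm (HH.mul (HH.str.symm (HH.mul a b)) c)
        = HH.str.symm (HH.mul a (HH.str.symm (HH.mul b c)))
      congr 1
      apply HH.str.injective
      simp [HH.str_mul, HH.hom_assoc]
    one_mul := fun a => by
      change HH.str.symm (HH.mul HH.one a) = a
      simp [HH.one_mul]
    mul_one := fun a => by
      change HH.str.symm (HH.mul a HH.one) = a
      simp [HH.mul_one] }

/-- The ordinary algebra underlying a monoidal Hom-Hopf algebra. -/
abbrev HomHopf.algebra (HH : HomHopf k H) : @Algebra k H _ HH.ring.toSemiring :=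
  letI := HH.ring
  Algebra.ofModule
    (fun r x y => by
      change HH.str.symm (HH.mul (r • x) y) = r • HH.str.symm (HH.mul x y)
      simp)
    (fun r x y => by
      change HH.str.symm (HH.mul x (r • y)) = r • HH.str.symm (HH.mul x y)
      simp)

/-- The ordinary comultiplication. -/
noncomputable def HomHopf.Dl (HH : HomHopf k H) : H →ₗ[k] H ⊗[k] H :=
  TensorProduct.map HH.str.toLinearMap HH.str.toLinearMap ∘ₗ HH.comul

theorem HomHopf.Dl_eq (HH : HomHopf k H) (h : H) : HH.Dl h = HH.comul (HH.str h) :=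
  (HH.comul_str h).symm

theorem HomHopf.Dl_symm (HH : HomHopf k H) (h : H) : HH.Dl (HH.str.symm h) = HH.comul h := by
  rw [HH.Dl_eq]
  simp

theorem HomHopf.coassoc_aux (HH : HomHopf k H) (h : H) :
    TensorProduct.assoc k H H H (HH.Dl.rTensor H (HH.Dl h)) = HH.Dl.lTensor H (HH.Dl h) := by
  have a1 : ∀ t : H ⊗[k] H, HH.Dl.rTensor H
      (TensorProduct.map HH.str.toLinearMap HH.str.toLinearMap t)
      = TensorProduct.map (TensorProduct.map (HH.str.toLinearMap ∘ₗ HH.str.toLinearMap)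
          (HH.str.toLinearMap ∘ₗ HH.str.toLinearMap)) (HH.str.toLinearMap ∘ₗ HH.str.toLinearMap)
          (TensorProduct.map HH.comul HH.str.symm.toLinearMap t) := by
    intro t
    induction t with
    | zero => simp
    | add t t' ht ht' => simp only [map_add, ht, ht']
    | tmul l r =>
      simp [HomHopf.Dl, HH.comul_str]
      rw [TensorProduct.map_map]
      rfl
  have a2 : ∀ t : H ⊗[k] H, HH.Dl.lTensor H
      (TensorProduct.map HH.str.toLinearMap HH.str.toLinearMap t)
      = TensorProduct.map (HH.str.toLinearMap ∘ₗ HH.str.toLinearMap)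
         (TensorProduct.map (HH.str.toLinearMap ∘ₗ HH.str.toLinearMap)
          (HH.str.toLinearMap ∘ₗ HH.str.toLinearMap))
          (TensorProduct.map HH.str.symm.toLinearMap HH.comul t) := by
    intro t
    induction t with
    | zero => simp
    | add t t' ht ht' => simp only [map_add, ht, ht']
    | tmul l r =>
      simp [HomHopf.Dl, HH.comul_str]
      rw [TensorProduct.map_map]
      rfl
  have a3 : ∀ (f : H →ₗ[k] H) (t : (H ⊗[k] H) ⊗[k] H),
      TensorProduct.assoc k H H H (TensorProduct.map (TensorProduct.map f f) f t)
      = TensorProduct.map f (TensorProduct.map f f) (TensorProduct.assoc k H H H t) := by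
    intro f t
    rw [← TensorProduct.map_map_assoc]
  have e : HH.Dl h = TensorProduct.map HH.str.toLinearMap HH.str.toLinearMap (HH.comul h) := rfl
  rw [e, a1, a2, a3, HH.hom_coassoc]

theorem HomHopf.counit_left_aux (HH : HomHopf k H) (h : H) :
    HH.counit.rTensor H (HH.Dl h) = 1 ⊗ₜ[k] h := by
  apply (TensorProduct.lid k H).injective
  have := HH.counit_comul_left (HH.str h)
  rw [HH.Dl_eq]
  simpa [LinearMap.rTensor] using this

theorem HomHopf.counit_right_aux (HH : HomHopf k H) (h : H) :
    HH.counit.lTensor H (HH.Dl h) = h ⊗ₜ[k] 1 := by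
  apply (TensorProduct.rid k H).injective
  have := HH.counit_comul_right (HH.str h)
  rw [HH.Dl_eq]
  simpa [LinearMap.lTensor] using this

/-- The ordinary coalgebra. -/
noncomputable abbrev HomHopf.coalgebra (HH : HomHopf k H) : Coalgebra k H where
  comul := HH.Dl
  counit := HH.counit
  coassoc := LinearMap.ext HH.coassoc_aux
  rTensor_counit_comp_comul := LinearMap.ext HH.counit_left_aux
  lTensor_counit_comp_comul := LinearMap.ext HH.counit_right_aux

/-- The ordinary bialgebra. -/
noncomputable abbrev HomHopf.bialgebra (HH : HomHopf k H) :
    @Bialgebra k H _ HH.ring.toSemiring :=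
  letI := HH.ring
  letI := HH.algebra
  letI : Coalgebra k H := HH.coalgebra
  Bialgebra.mk' k H
    HH.counit_one
    (fun {a b} => by
      change HH.counit (HH.str.symm (HH.mul a b)) = HH.counit a * HH.counit b
      rw [← HH.counit_mul, ← HH.counit_str (HH.str.symm _)]
      simp)
    (by
      change HH.Dl HH.one = HH.one ⊗ₜ[k] HH.one
      rw [HH.Dl_eq, HH.str_one, HH.comul_one])
    (fun {a b} => by
      change HH.Dl (HH.str.symm (HH.mul a b)) = HH.Dl a * HH.Dl b
      rw [HH.Dl_symm, HH.comul_mul]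
      have key : ∀ s t : H ⊗[k] H,
        TensorProduct.map (TensorProduct.lift HH.mul) (TensorProduct.lift HH.mul)
          (TensorProduct.tensorTensorTensorComm k H H H H (s ⊗ₜ[k] t))
        = (TensorProduct.map HH.str.toLinearMap HH.str.toLinearMap s) *
          (TensorProduct.map HH.str.toLinearMap HH.str.toLinearMap t) := by
        intro s t
        induction s with
        | zero => simp
        | add s s' hs hs' => simp only [add_tmul, map_add, add_mul, hs, hs']
        | tmul p q =>
          induction t with
          | zero => simp
          | add t t' ht ht' => simp only [tmul_add, map_add, mul_add, ht, ht']
          | tmul p' q' =>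
            have e : ∀ u v : H, HH.str u * HH.str v = HH.mul u v := by
              intro u v
              change HH.str.symm (HH.mul (HH.str u) (HH.str v)) = _
              rw [HH.symm_mul]; simp
            simp [e]
      exact key _ _)

/-- The ordinary Hopf algebra. -/
noncomputable abbrev HomHopf.hopf (HH : HomHopf k H) :
    @HopfAlgebra k H _ HH.ring.toSemiring :=
  letI := HH.ring
  letI := HH.bialgebra
  { antipode := HH.S
    mul_antipode_rTensor_comul := by
      ext h
      have e : ∀ t : H ⊗[k] H, LinearMap.mul' k H (HH.S.rTensor H
          (TensorProduct.map HH.str.toLinearMap HH.str.toLinearMap t))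
          = TensorProduct.lift HH.mul (TensorProduct.map HH.S LinearMap.id t) := by
        intro t
        induction t with
        | zero => simp
        | add t t' ht ht' => simp only [map_add, ht, ht']
        | tmul u v =>
          simp [← HH.S_str]
          change HH.str.symm (HH.mul (HH.str (HH.S u)) (HH.str v)) = _
          rw [HH.symm_mul]; simp
      exact (e (HH.comul h)).trans (HH.S_mul_left h)
    mul_antipode_lTensor_comul := by
      ext h
      have e : ∀ t : H ⊗[k] H, LinearMap.mul' k H (HH.S.lTensor H
          (TensorProduct.map HH.str.toLinearMap HH.str.toLinearMap t))
          = TensorProduct.lift HH.mul (TensorProduct.map LinearMap.id HH.S t) := by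
        intro t
        induction t with
        | zero => simp
        | add t t' ht ht' => simp only [map_add, ht, ht']
        | tmul u v =>
          simp [← HH.S_str]
          change HH.str.symm (HH.mul (HH.str u) (HH.str (HH.S v))) = _
          rw [HH.symm_mul]; simp
      exact (e (HH.comul h)).trans (HH.S_mul_right h) }

end Untwist

section Bridge

open TensorProduct

variable {k : Type*} [Field k] {H : Type*} [AddCommGroup H] [Module k H]

/-- `l ⊗ r ↦ T r ∘ (x ∘ l)` for the ordinary product. -/
noncomputable def HomHopf.F (HH : HomHopf k H) (T : H →ₗ[k] H) (x : H) : H ⊗[k] H →ₗ[k] H :=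
  @ordF k _ H HH.ring HH.hopf T x

theorem HomHopf.F_tmul (HH : HomHopf k H) (T : H →ₗ[k] H) (x l r : H) :
    HH.F T x (l ⊗ₜ[k] r) = HH.str.symm (HH.mul (T r) (HH.str.symm (HH.mul x l))) :=
  @ordF_tmul k _ H HH.ring HH.hopf T x l r

theorem HomHopf.F_add (HH : HomHopf k H) (T : H →ₗ[k] H) (x y : H) :
    HH.F T (x + y) = HH.F T x + HH.F T y :=
  @ordF_add k _ H HH.ring HH.hopf T x y

theorem HomHopf.F_smul (HH : HomHopf k H) (T : H →ₗ[k] H) (c : k) (x : H) :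
    HH.F T (c • x) = c • HH.F T x :=
  @ordF_smul k _ H HH.ring HH.hopf T c x

theorem HomHopf.F_mul (HH : HomHopf k H) (T : H →ₗ[k] H)
    (h1 : ∀ h, T (HH.S h) = h) (h2 : ∀ h, HH.S (T h) = h) (x a b : H) :
    HH.F T (HH.F T x (HH.Dl a)) (HH.Dl b) = HH.F T x (HH.Dl (HH.str.symm (HH.mul a b))) :=
  @ord_act_mul k _ H HH.ring HH.hopf T h1 h2 x a b

theorem HomHopf.F_one (HH : HomHopf k H) (T : H →ₗ[k] H)
    (h1 : ∀ h, T (HH.S h) = h) (x : H) :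
    HH.F T x (HH.Dl HH.one) = x :=
  @ord_act_one k _ H HH.ring HH.hopf T h1 x

theorem HomHopf.F_unit (HH : HomHopf k H) (T : H →ₗ[k] H)
    (h1 : ∀ h, T (HH.S h) = h) (h2 : ∀ h, HH.S (T h) = h) (p : H) :
    HH.F T HH.one (HH.Dl p) = HH.counit p • HH.one :=
  @ord_contract_left k _ H HH.ring HH.hopf T h1 h2 p

theorem HomHopf.mul'_eq (HH : HomHopf k H) (t : H ⊗[k] H) :
    (letI := HH.ring
     letI := HH.algebra
     LinearMap.mul' k H t) = HH.str.symm (TensorProduct.lift HH.mul t) := by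
  induction t with
  | zero => simp
  | add t t' ht ht' =>
    simp only [map_add] at ht ht' ⊢
    rw [ht, ht']
  | tmul u v => rfl

theorem HomHopf.F_alg (HH : HomHopf k H) (T : H →ₗ[k] H)
    (h1 : ∀ h, T (HH.S h) = h) (h2 : ∀ h, HH.S (T h) = h) (x y h : H) :
    HH.F T (HH.str.symm (HH.mul y x)) (HH.Dl h)
      = HH.str.symm (TensorProduct.lift HH.mul (TensorProduct.comm k H H
          (TensorProduct.map (HH.F T x ∘ₗ HH.Dl) (HH.F T y ∘ₗ HH.Dl) (HH.Dl h)))) :=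
  (@ord_act_alg k _ H HH.ring HH.hopf T h1 h2 x y h).trans (HH.mul'_eq _)

/-- Automorphisms of all the structure. -/
def HomHopf.auts (HH : HomHopf k H) : Subgroup (H ≃ₗ[k] H) where
  carrier := {f | (∀ a b, f (HH.mul a b) = HH.mul (f a) (f b)) ∧ f HH.one = HH.one ∧
    (∀ a, HH.comul (f a) = TensorProduct.map f.toLinearMap f.toLinearMap (HH.comul a)) ∧
    (∀ a, HH.counit (f a) = HH.counit a) ∧ (∀ a, HH.S (f a) = f (HH.S a)) ∧
    (∀ a, HH.str (f a) = f (HH.str a))}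
  one_mem' := by
    refine ⟨fun _ _ => rfl, rfl, fun a => ?_, fun _ => rfl, fun _ => rfl, fun _ => rfl⟩
    change HH.comul a = TensorProduct.map LinearMap.id LinearMap.id (HH.comul a)
    rw [TensorProduct.map_id]
    rfl
  mul_mem' := by
    rintro f g ⟨f1, f2, f3, f4, f5, f6⟩ ⟨g1, g2, g3, g4, g5, g6⟩
    refine ⟨fun a b => ?_, ?_, fun a => ?_, fun a => ?_, fun a => ?_, fun a => ?_⟩
    · simp [LinearEquiv.mul_apply, f1, g1]
    · simp [LinearEquiv.mul_apply, f2, g2]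
    · rw [LinearEquiv.mul_apply, f3, g3, TensorProduct.map_map]
      rfl
    · simp [LinearEquiv.mul_apply, f4, g4]
    · simp [LinearEquiv.mul_apply, f5, g5]
    · simp [LinearEquiv.mul_apply, f6, g6]
  inv_mem' := by
    rintro f ⟨f1, f2, f3, f4, f5, f6⟩
    change _ ∧ _
    have i1 : ∀ a, f (f⁻¹ a) = a := fun a => f.apply_symm_apply a
    have i2 : ∀ a, f⁻¹ (f a) = a := fun a => f.symm_apply_apply a
    refine ⟨fun a b => ?_, ?_, fun a => ?_, fun a => ?_, fun a => ?_, fun a => ?_⟩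
    · apply f.injective
      rw [f1, i1, i1, i1]
    · apply f.injective
      rw [i1, f2]
    · have := f3 (f⁻¹ a)
      rw [i1] at this
      rw [this, TensorProduct.map_map]
      have e : (f⁻¹ : H ≃ₗ[k] H).toLinearMap ∘ₗ f.toLinearMap = LinearMap.id :=
        LinearMap.ext i2
      rw [e, TensorProduct.map_id]
      rfl
    · rw [← f4, i1]
    · apply f.injective
      rw [← f5, i1, i1]
    · apply f.injective
      rw [← f6, i1, i1]

theorem HomHopf.str_mem (HH : HomHopf k H) : HH.str ∈ HH.auts :=
  ⟨HH.str_mul, HH.str_one, HH.comul_str, HH.counit_str, fun a => (HH.S_str a).symm, fun _ => rfl⟩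

theorem HomHopf.T_comm (HH : HomHopf k H) (T : H →ₗ[k] H)
    (h1 : ∀ h, T (HH.S h) = h) (h2 : ∀ h, HH.S (T h) = h) (f : H ≃ₗ[k] H) (hf : f ∈ HH.auts)
    (a : H) : T (f a) = f (T a) := by
  obtain ⟨f1, f2, f3, f4, f5, f6⟩ := hf
  conv_lhs => rw [← h2 a, ← f5, h1]

theorem HomHopf.symm_comm (HH : HomHopf k H) (f : H ≃ₗ[k] H) (hf : f ∈ HH.auts)
    (a : H) : f (HH.str.symm a) = HH.str.symm (f a) := by
  obtain ⟨f1, f2, f3, f4, f5, f6⟩ := hf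
  apply HH.str.injective
  rw [f6]
  simp

theorem HomHopf.Dl_aut (HH : HomHopf k H) (f : H ≃ₗ[k] H) (hf : f ∈ HH.auts) (h : H) :
    HH.Dl (f h) = TensorProduct.map f.toLinearMap f.toLinearMap (HH.Dl h) := by
  obtain ⟨f1, f2, f3, f4, f5, f6⟩ := hf
  rw [HH.Dl_eq, f6, f3, HH.Dl_eq]

theorem HomHopf.F_aut (HH : HomHopf k H) (T : H →ₗ[k] H)
    (h1 : ∀ h, T (HH.S h) = h) (h2 : ∀ h, HH.S (T h) = h) (f : H ≃ₗ[k] H) (hf : f ∈ HH.auts)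
    (x : H) (h : H) :
    HH.F T (f x) (HH.Dl (f h)) = f (HH.F T x (HH.Dl h)) := by
  rw [HH.Dl_aut f hf]
  induction HH.Dl h with
  | zero => simp
  | add t t' ht ht' => simp only [map_add, ht, ht']
  | tmul l r =>
    simp only [TensorProduct.map_tmul, HomHopf.F_tmul, LinearEquiv.coe_coe,
      HH.symm_comm f hf, HH.T_comm T h1 h2 f hf, hf.1]

/-- The opposite Hom-algebra. -/
def HomHopf.opAlg (HH : HomHopf k H) : HomAlg k H where
  mul := HH.mul.flip
  one := HH.one
  str := HH.str
  hom_assoc a b c := by simp [HH.hom_assoc]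
  mul_one a := by simp [HH.one_mul]
  one_mul a := by simp [HH.mul_one]
  str_mul a b := by simp [HH.str_mul]
  str_one := HH.str_one

/-- The action. -/
noncomputable def HomHopf.act (HH : HomHopf k H) (T : H →ₗ[k] H) (g : H ≃ₗ[k] H) :
    H →ₗ[k] H →ₗ[k] H :=
  LinearMap.mk₂ k (fun x h => HH.str (HH.F T x (HH.Dl (g h))))
    (fun x y h => by simp [HH.F_add]) (fun c x h => by simp [HH.F_smul])
    (fun x h h' => by simp) (fun c x h => by simp)

theorem HomHopf.act_apply (HH : HomHopf k H) (T : H →ₗ[k] H) (g : H ≃ₗ[k] H) (x h : H) :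
    HH.act T g x h = HH.str (HH.F T x (HH.Dl (g h))) := rfl

end Bridge

/-- Let `(H, β)` be a monoidal Hom-Hopf algebra with bijective
antipode `S` and `n : ℤ`.  Then `H^op` (the same space with opposite multiplication,
same unit and structure map), equipped with the action
`x ◁ h = β^{n+1}(S⁻¹(h₂)) · (β⁻¹(x) · βⁿ(h₁))` (products in `H`), is a right
`(H, β)`-Hom-module algebra. -/
theorem op_is_right_hom_module_algebra
    {k : Type*} [Field k] {H : Type*} [AddCommGroup H] [Module k H]
    (HH : HomHopf k H) (Sinv : H →ₗ[k] H)
    (hS₁ : ∀ h, Sinv (HH.S h) = h) (hS₂ : ∀ h, HH.S (Sinv h) = h) (n : ℤ) :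
    ∃ Hop : HomAlg k H,
      Hop.mul = HH.mul.flip ∧ Hop.one = HH.one ∧ Hop.str = HH.str ∧
      ∃ act : H →ₗ[k] H →ₗ[k] H,
        (∀ x h, act x h
          = TensorProduct.lift HH.mul (TensorProduct.comm k H H
              (TensorProduct.map
                (HH.mul (HH.str.symm x) ∘ₗ (HH.str ^ n).toLinearMap)
                ((HH.str ^ (n + 1)).toLinearMap ∘ₗ Sinv) (HH.comul h)))) ∧
        IsRightHomModuleAlg HH.toHomBialg Hop act := by
  have hg : HH.str ^ n ∈ HH.auts := HH.auts.zpow_mem HH.str_mem n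
  have hb := HH.str_mem
  have hgs : ∀ h, (HH.str ^ (n + 1)) h = (HH.str ^ n) (HH.str h) := fun h => by
    rw [zpow_add_one, LinearEquiv.mul_apply]
  have hform : ∀ x h, HH.act Sinv (HH.str ^ n) x h
          = TensorProduct.lift HH.mul (TensorProduct.comm k H H
              (TensorProduct.map
                (HH.mul (HH.str.symm x) ∘ₗ (HH.str ^ n).toLinearMap)
                ((HH.str ^ (n + 1)).toLinearMap ∘ₗ Sinv) (HH.comul h))) := by
    intro x h
    rw [HH.act_apply, HH.Dl_aut _ hg]
    change HH.str (HH.F Sinv x (TensorProduct.map _ _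
      (TensorProduct.map HH.str.toLinearMap HH.str.toLinearMap (HH.comul h)))) = _
    induction HH.comul h with
    | zero => simp
    | add t t' ht ht' => simp only [map_add, ht, ht']
    | tmul l r =>
      simp only [TensorProduct.map_tmul, HomHopf.F_tmul, LinearEquiv.coe_coe,
        LinearMap.comp_apply, TensorProduct.comm_tmul, TensorProduct.lift.tmul, hgs,
        HH.T_comm Sinv hS₁ hS₂ _ hg, HH.T_comm Sinv hS₁ hS₂ _ hb, LinearEquiv.apply_symm_apply]
      rw [HH.symm_mul x, ← HH.symm_comm _ hg, LinearEquiv.symm_apply_apply]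
  generalize HH.str ^ n = g at hg hform
  refine ⟨HH.opAlg, rfl, rfl, rfl, HH.act Sinv g, hform, ⟨⟨?_, ?_, ?_⟩, ?_, ?_⟩⟩
  · intro m a b
    change HH.act Sinv g (HH.act Sinv g m a) (HH.str b)
      = HH.act Sinv g (HH.str m) (HH.mul a b)
    simp only [HH.act_apply]
    rw [← hg.2.2.2.2.2 b, HH.F_aut Sinv hS₁ hS₂ _ hb, HH.F_mul Sinv hS₁ hS₂,
      ← HH.F_aut Sinv hS₁ hS₂ _ hb, LinearEquiv.apply_symm_apply, hg.1]
  · intro m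
    change HH.act Sinv g m HH.one = HH.str m
    rw [HH.act_apply, hg.2.1, HH.F_one Sinv hS₁]
  · intro m a
    change HH.str (HH.act Sinv g m a) = HH.act Sinv g (HH.str m) (HH.str a)
    simp only [HH.act_apply]
    rw [← hg.2.2.2.2.2 a, HH.F_aut Sinv hS₁ hS₂ _ hb]
  · intro x y a
    change HH.act Sinv g (HH.mul y x) a = TensorProduct.lift HH.mul.flip
      (TensorProduct.map (HH.act Sinv g x) (HH.act Sinv g y) (HH.comul a))
    rw [HH.act_apply]
    have e : HH.mul y x = HH.str.symm (HH.mul (HH.str y) (HH.str x)) := by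
      rw [HH.symm_mul]; simp
    rw [e, HH.F_alg Sinv hS₁ hS₂, LinearEquiv.apply_symm_apply, HH.Dl_aut _ hg]
    change TensorProduct.lift HH.mul (TensorProduct.comm k H H
      (TensorProduct.map _ _ (TensorProduct.map _ _
      (TensorProduct.map HH.str.toLinearMap HH.str.toLinearMap (HH.comul a))))) = _
    induction HH.comul a with
    | zero => simp
    | add t t' ht ht' => simp only [map_add, ht, ht']
    | tmul l r =>
      simp only [TensorProduct.map_tmul, LinearEquiv.coe_coe,
        LinearMap.comp_apply, TensorProduct.comm_tmul, TensorProduct.lift.tmul,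
        LinearMap.flip_apply, HH.act_apply, ← hg.2.2.2.2.2, HH.F_aut Sinv hS₁ hS₂ _ hb]
  · intro a
    change HH.act Sinv g HH.one a = HH.counit a • HH.one
    rw [HH.act_apply, HH.F_unit Sinv hS₁ hS₂, hg.2.2.2.1, map_smul, HH.str_one]
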